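/- Let a, b, c be complex numbers such that (a+b)/2 is not a nonpositive integer, 2c−2 is not a nonpositive integer, and Re(2c − a − b) > 5. Then ₃F₂(a, b, c; (a+b)/2, 2c−1; 1) = ₃F₂(a, b, c; (a+b)/2, 2c−2; 1) − (abc/((2c−1)(c−1)(a+b))) · ₃F₂(a+1, b+1, c+1; (a+b+2)/2, 2c; 1). -/

import Mathlib

open scoped Nat

/-- The generalized hypergeometric series `₃F₂(a, b, c; d, e; 1)`, defined as
`∑ₙ (a)ₙ(b)ₙ(c)ₙ / ((d)ₙ(e)ₙ n!)` where `(α)ₙ` is the Pochhammer symbol. -/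
noncomputable def hyp3F2 (a b c d e : ℂ) : ℂ :=
  ∑' n : ℕ,
    ((ascPochhammer ℂ n).eval a * (ascPochhammer ℂ n).eval b * (ascPochhammer ℂ n).eval c) /
      ((ascPochhammer ℂ n).eval d * (ascPochhammer ℂ n).eval e * (n ! : ℂ))

open Filter Topology Asymptotics

theorem poch_prod (a : ℂ) (n : ℕ) :
    (ascPochhammer ℂ n).eval a = ∏ j ∈ Finset.range n, (a + j) := by
  induction n with
  | zero => simp
  | succ n ih => rw [ascPochhammer_succ_eval, ih, Finset.prod_range_succ]

theorem poch_left (a : ℂ) (n : ℕ) :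
    (ascPochhammer ℂ (n + 1)).eval a = a * (ascPochhammer ℂ n).eval (a + 1) := by
  rw [ascPochhammer_succ_left]; simp

theorem poch_ne (d : ℂ) (hd : ∀ m : ℕ, d ≠ -(m : ℂ)) (n : ℕ) :
    (ascPochhammer ℂ n).eval d ≠ 0 := by
  rw [poch_prod, Finset.prod_ne_zero_iff]
  intro j _ h
  exact hd j (eq_neg_of_add_eq_zero_left h)

theorem pow_fact_bigO (a : ℂ) :
    (fun n : ℕ => (n : ℂ) ^ a * (n ! : ℂ)) =O[atTop] (fun n : ℕ => (n : ℝ) ^ a.re * (n ! : ℝ)) := by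
  refine IsBigO.of_bound 1 ?_
  filter_upwards [eventually_gt_atTop 0] with n hn
  rw [norm_mul, norm_mul, Complex.norm_natCast_cpow_of_pos hn, Real.norm_of_nonneg (by positivity)]
  simp

theorem poch_up (a : ℂ) : (fun n : ℕ => (ascPochhammer ℂ (n + 1)).eval a) =O[atTop]
    (fun n : ℕ => (n : ℝ) ^ a.re * (n ! : ℝ)) := by
  by_cases h : ∀ m : ℕ, a ≠ -(m : ℂ)
  · have h1 := ((Complex.GammaSeq_tendsto_Gamma a).inv₀ (Complex.Gamma_ne_zero h)).isBigO_one ℝ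
    have h2 := (pow_fact_bigO a).mul h1
    refine (h2.congr' ?_ ?_)
    · filter_upwards [eventually_gt_atTop 0] with n hn
      have hp := poch_ne a h (n + 1)
      have hf : (n ! : ℂ) ≠ 0 := by exact_mod_cast n.factorial_ne_zero
      have hn' : (n : ℂ) ^ a ≠ 0 := by
        rw [Ne, Complex.cpow_eq_zero_iff]
        rintro ⟨h, -⟩
        exact hn.ne' (by exact_mod_cast h)
      rw [Complex.GammaSeq, ← poch_prod]
      field_simp
    · simp
  · push Not at h
    obtain ⟨m, hm⟩ := h
    refine IsBigO.of_bound 1 ?_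
    filter_upwards [eventually_ge_atTop m] with n hn
    have h0 : (ascPochhammer ℂ (n + 1)).eval a = 0 := by
      rw [poch_prod]
      apply Finset.prod_eq_zero (i := m) (by simp; omega)
      rw [hm]; simp
    rw [h0, norm_zero]
    positivity

theorem poch_down (d : ℂ) (hd : ∀ m : ℕ, d ≠ -(m : ℂ)) :
    (fun n : ℕ => ((ascPochhammer ℂ (n + 1)).eval d)⁻¹) =O[atTop]
    (fun n : ℕ => ((n : ℝ) ^ d.re * (n ! : ℝ))⁻¹) := by
  obtain ⟨C, hC⟩ := ((Complex.GammaSeq_tendsto_Gamma d).isBigO_one ℝ).bound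
  refine IsBigO.of_bound C ?_
  filter_upwards [eventually_gt_atTop 0, hC] with n hn hb
  rw [Complex.GammaSeq, ← poch_prod, norm_div, norm_mul, Complex.norm_natCast_cpow_of_pos hn] at hb
  have hp : 0 < ‖(ascPochhammer ℂ (n + 1)).eval d‖ := norm_pos_iff.2 (poch_ne d hd _)
  have hx : 0 < (n : ℝ) ^ d.re * (n ! : ℝ) := by positivity
  rw [norm_inv, norm_inv, Real.norm_of_nonneg hx.le, ← div_eq_mul_inv, le_div_iff₀ hx]
  simp only [Complex.norm_natCast, norm_one, mul_one] at hb
  rw [div_eq_mul_inv] at hb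
  linarith

theorem hyp_summable (a b c d e : ℂ) (hd : ∀ m : ℕ, d ≠ -(m : ℂ)) (he : ∀ m : ℕ, e ≠ -(m : ℂ))
    (hs : 0 < (d + e - a - b - c).re) :
    Summable (fun n : ℕ => ((ascPochhammer ℂ n).eval a * (ascPochhammer ℂ n).eval b *
      (ascPochhammer ℂ n).eval c) /
      ((ascPochhammer ℂ n).eval d * (ascPochhammer ℂ n).eval e * (n ! : ℂ))) := by
  rw [← summable_nat_add_iff 1]
  have hf : (fun n : ℕ => (((n + 1)! : ℕ) : ℂ)⁻¹) =O[atTop] (fun n : ℕ => ((n : ℝ) * (n ! : ℝ))⁻¹) := by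
    refine IsBigO.of_bound 1 ?_
    filter_upwards [eventually_gt_atTop 0] with n hn
    rw [norm_inv, norm_inv, Complex.norm_natCast, Real.norm_of_nonneg (by positivity), one_mul]
    apply inv_anti₀ (by positivity)
    rw [Nat.factorial_succ]; push_cast
    gcongr; linarith
  have h := ((((poch_up a).mul (poch_up b)).mul (poch_up c)).mul
    (((poch_down d hd).mul (poch_down e he)).mul hf))
  have hsum : Summable (fun n : ℕ => (n : ℝ) ^ (-(d + e - a - b - c).re - 1)) :=
    Real.summable_nat_rpow.2 (by linarith)
  refine summable_of_isBigO_nat hsum (h.congr' ?_ ?_)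
  · refine Eventually.of_forall fun n => ?_
    simp only [div_eq_mul_inv, mul_inv]
  · filter_upwards [eventually_gt_atTop 0] with n hn
    have hn' : (0 : ℝ) < n := by exact_mod_cast hn
    have hf : (n ! : ℝ) ≠ 0 := by exact_mod_cast n.factorial_ne_zero
    have : -(d + e - a - b - c).re - 1 = a.re + b.re + c.re - d.re - e.re - 1 := by
      simp; ring
    rw [this, Real.rpow_sub hn', Real.rpow_sub hn', Real.rpow_sub hn', Real.rpow_add hn',
      Real.rpow_add hn', Real.rpow_one]
    field_simp

theorem watson_contiguous_19 (a b c : ℂ)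
    (hd : ∀ m : ℕ, (a + b) / 2 ≠ -(m : ℂ))
    (he : ∀ m : ℕ, 2 * c - 2 ≠ -(m : ℂ))
    (hre : (2 * c - a - b).re > 5) :
    hyp3F2 a b c ((a + b) / 2) (2 * c - 1) =
      hyp3F2 a b c ((a + b) / 2) (2 * c - 2) -
        a * b * c / ((2 * c - 1) * (c - 1) * (a + b)) *
          hyp3F2 (a + 1) (b + 1) (c + 1) ((a + b + 2) / 2) (2 * c) := by
  have shift : ∀ x : ℂ, (∀ m : ℕ, x ≠ -(m : ℂ)) → ∀ m : ℕ, x + 1 ≠ -(m : ℂ) := by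
    intro x hx m h
    apply hx (m + 1)
    push_cast
    linear_combination h
  have e1 : (a + b + 2) / 2 = (a + b) / 2 + 1 := by ring
  have hK : a * b * c / ((2 * c - 1) * (c - 1) * (a + b)) =
      a * b * c / ((2 * c - 2 + 1) * (2 * c - 2) * ((a + b) / 2)) := by
    congr 1; ring
  have e2 : 2 * c = 2 * c - 2 + 1 + 1 := by ring
  have e3 : 2 * c - 1 = 2 * c - 2 + 1 := by ring
  have hre2 : 2 * c.re - a.re - b.re > 5 := by simpa using hre
  have hdre : ((a + b) / 2).re = (a.re + b.re) / 2 := by simp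
  have here : (2 * c - 2).re = 2 * c.re - 2 := by simp
  rw [hK, e1]
  have : hyp3F2 (a + 1) (b + 1) (c + 1) ((a + b) / 2 + 1) (2 * c) =
    hyp3F2 (a + 1) (b + 1) (c + 1) ((a + b) / 2 + 1) (2 * c - 2 + 1 + 1) := by rw [← e2]
  rw [this, e3]
  generalize (a + b) / 2 = d at *
  generalize 2 * c - 2 = e at *
  have s2 := hyp_summable a b c d e hd he (by simp; linarith)
  have s3 := hyp_summable (a + 1) (b + 1) (c + 1) (d + 1) (e + 1 + 1) (shift _ hd)
    (shift _ (shift _ he)) (by simp; linarith)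
  have s1 := hyp_summable a b c d (e + 1) hd (shift _ he) (by simp; linarith)
  unfold hyp3F2
  rw [s1.tsum_eq_zero_add, s2.tsum_eq_zero_add, ← tsum_mul_left, add_sub_assoc,
    ← ((summable_nat_add_iff 1).2 s2).tsum_sub (s3.mul_left _)]
  congr 1
  · simp
  refine tsum_congr fun n => ?_
  have hd0 : d ≠ 0 := by simpa using hd 0
  have he0 : e ≠ 0 := by simpa using he 0
  have he1 : e + 1 ≠ 0 := by simpa using shift _ he 0
  have hdn := poch_ne (d + 1) (shift _ hd) n
  have hen := poch_ne (e + 1 + 1) (shift _ (shift _ he)) n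
  have hfn : (n ! : ℂ) ≠ 0 := by exact_mod_cast n.factorial_ne_zero
  have hn1 : (n : ℂ) + 1 ≠ 0 := by exact_mod_cast n.succ_ne_zero
  have hk : (ascPochhammer ℂ (n + 1)).eval e * (e + n + 1) =
      e * ((e + 1) * (ascPochhammer ℂ n).eval (e + 1 + 1)) := by
    have h1 := ascPochhammer_succ_eval (n + 1) e
    rw [poch_left, poch_left] at h1
    rw [h1]; push_cast; ring
  have hen1 := poch_ne e he (n + 1)
  have hz : e + n + 1 ≠ 0 := by
    intro h0; apply he (n + 1); push_cast; linear_combination h0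
  rw [eq_div_of_mul_eq hz hk, poch_left a, poch_left b, poch_left c, poch_left d, poch_left (e + 1),
    Nat.factorial_succ]
  push_cast
  field_simp
  ring
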